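/- arXiv:2106.12249 — 2 statements merged into one kernel-verified Lean document; each statement's English description precedes it below -/
import Mathlib

section
/- Let G be an A-Stick N-overlap graph with no isolated vertices, ≺ an A-Stick order of G, and b_t ≺ b_s vertices of B with 1_s ≤ 1_t such that b_t ≺° b_s does not hold. Then either (a) there exist vertices b_x, b_y of B, consecutive among B in ≺, with b_t ⪯ b_x ≺ b_y ⪯ b_s, whose swap is good; or (b) there exists b_q ∈ B with b_t ≺ b_q ≺ b_s such that b_t ≺° b_q and 1_q < 1_s. -/
open Sum

/-- The relation `≺°` generated by the rules (O), (A), (TB), (FB), (T). -/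
inductive Prec (n : ℕ) (β : Type) (E : Fin n → β → Prop) (k : β → Fin n) :
    (Fin n ⊕ β) → (Fin n ⊕ β) → Prop
  | O : ∀ {i j : Fin n}, i < j → Prec n β E k (inl i) (inl j)
  | A : ∀ {t : Fin n} {j : β}, E t j → Prec n β E k (inl t) (inr j)
  | TB : ∀ {s t : Fin n} {h j : β}, s < t → t < k j → E s j → ¬ E t j → E t h →
      Prec n β E k (inr h) (inr j)
  | FB : ∀ {t : Fin n} {w h j : β}, Prec n β E k (inr w) (inr j) → k j < t → E t w →
      E t h → Prec n β E k (inr h) (inr j)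
  | T : ∀ {p q r : Fin n ⊕ β}, Prec n β E k p q → Prec n β E k q r → Prec n β E k p r
/-- A Stick order for `G = (A ∪ B, E)`: a linear (strict total) order on `A ∪ B` such that
every `A`-endpoint of an edge precedes its `B`-endpoint, and there is no forbidden
configuration `a' ≺ a ≺ b ≺ b'` with `a'b ∈ E`, `ab' ∈ E`, `ab ∉ E`. -/
def IsStickOrder (n : ℕ) (β : Type) (E : Fin n → β → Prop)
    (r : (Fin n ⊕ β) → (Fin n ⊕ β) → Prop) : Prop :=
  IsStrictTotalOrder (Fin n ⊕ β) r ∧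
  (∀ (a : Fin n) (b : β), E a b → r (inl a) (inr b)) ∧
  ¬ ∃ (a a' : Fin n) (b b' : β),
      r (inl a') (inl a) ∧ r (inl a) (inr b) ∧ r (inr b) (inr b') ∧
      E a' b ∧ E a b' ∧ ¬ E a b

/-- An A-Stick order: a Stick order whose restriction to `A` is the given order. -/
def IsAStickOrder (n : ℕ) (β : Type) (E : Fin n → β → Prop)
    (r : (Fin n ⊕ β) → (Fin n ⊕ β) → Prop) : Prop :=
  IsStickOrder n β E r ∧ ∀ i j : Fin n, r (inl i) (inl j) ↔ i < j
/-- `G` is an N-overlap graph: for all distinct `b_s, b_t ∈ B`, neither `N(b_s) ⊆ N(b_t)`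
nor `N(b_t) ⊆ N(b_s)`. -/
def NOverlap (n : ℕ) (β : Type) (E : Fin n → β → Prop) : Prop :=
  ∀ s t : β, s ≠ t → ¬ ∀ a : Fin n, E a s → E a t
/-- The rank of a vertex in an order `r`: the number of vertices strictly preceding it
(positions in the steady representation). -/
noncomputable def rankOf (n : ℕ) (β : Type) (r : (Fin n ⊕ β) → (Fin n ⊕ β) → Prop)
    (v : Fin n ⊕ β) : ℕ :=
  Set.ncard {w : Fin n ⊕ β | r w v}

open Classical in
/-- The total segment length of the steady Stick representation with origin order `r`, all
segments as short as possible: the segment of `b ∈ B` has length `rank b - rank a_{1_b}`,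
and the segment of `a ∈ A` has length `rank b* - rank a` where `b*` is the `r`-largest
neighbor of `a` (its rank is the sup of the ranks of the neighbors of `a`). -/
noncomputable def lengthOf (n : ℕ) (β : Type) [Fintype β] (E : Fin n → β → Prop)
    (one : β → Fin n) (r : (Fin n ⊕ β) → (Fin n ⊕ β) → Prop) : ℕ :=
  (∑ b : β, (rankOf n β r (inr b) - rankOf n β r (inl (one b)))) +
  ∑ a : Fin n,
    ((Finset.univ.filter (fun b : β => E a b)).sup (fun b => rankOf n β r (inr b))
      - rankOf n β r (inl a))
/-- The order obtained from `r` by moving `b_s` immediately before `a_v`, keeping all other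
relative positions unchanged. -/
def moveBefore (n : ℕ) (β : Type) (r : (Fin n ⊕ β) → (Fin n ⊕ β) → Prop)
    (s : β) (v : Fin n) : (Fin n ⊕ β) → (Fin n ⊕ β) → Prop :=
  fun x y =>
    (x = inr s ∧ y ≠ inr s ∧ (y = inl v ∨ r (inl v) y)) ∨
    (x ≠ inr s ∧ y = inr s ∧ r x (inl v)) ∨
    (x ≠ inr s ∧ y ≠ inr s ∧ r x y)

/-- An alternate chain (for the pair with right element `b_s`, starting at `a_c`):
a maximal sequence `a_{x_1} = a_c, b_{y_1}, a_{x_2}, …, a_{x_l}, b_{y_l}, a_{x_{l+1}}` with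
`a_{x_g} b_{y_g} ∈ E`, `a_{x_{g+1}} b_{y_g} ∈ E`, `x_{g+1} < x_g` for `1 ≤ g ≤ l`, and
`a_{x_g} b_s ∉ E` for `1 ≤ g ≤ l + 1`. -/
def IsAltChain (n : ℕ) (β : Type) (E : Fin n → β → Prop) (s : β) (c : Fin n)
    (l : ℕ) (x : ℕ → Fin n) (y : ℕ → β) : Prop :=
  x 1 = c ∧
  (∀ g : ℕ, 1 ≤ g → g ≤ l → E (x g) (y g) ∧ E (x (g + 1)) (y g) ∧ x (g + 1) < x g) ∧
  (∀ g : ℕ, 1 ≤ g → g ≤ l + 1 → ¬ E (x g) s) ∧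
  ¬ ∃ (b : β) (a : Fin n), E (x (l + 1)) b ∧ E a b ∧ a < x (l + 1) ∧ ¬ E a s

/-- `a_v` is the limit `v_st` of `b_s` and `b_t`: with `c = min {i | a_i b_t ∈ E, a_i b_s ∉ E}`,
`v` is the minimum over all alternate chains of the index of the last chain element. -/
def IsLimit (n : ℕ) (β : Type) (E : Fin n → β → Prop) (t s : β) (v : Fin n) : Prop :=
  ∃ c : Fin n, (E c t ∧ ¬ E c s ∧ ∀ i : Fin n, E i t → ¬ E i s → c ≤ i) ∧
    (∃ (l : ℕ) (x : ℕ → Fin n) (y : ℕ → β), IsAltChain n β E s c l x y ∧ x (l + 1) = v) ∧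
    (∀ (l : ℕ) (x : ℕ → Fin n) (y : ℕ → β), IsAltChain n β E s c l x y → v ≤ x (l + 1))

/-- The swap of `b_t` and `b_s` (in the order `r`) is good: moving `b_s` immediately before
the limit `a_{v_st}` yields again an A-Stick order whose steady shortest representation has
strictly smaller total segment length. -/
def GoodSwap (n : ℕ) (β : Type) [Fintype β] (E : Fin n → β → Prop) (one : β → Fin n)
    (r : (Fin n ⊕ β) → (Fin n ⊕ β) → Prop) (t s : β) : Prop :=
  ∃ v : Fin n, IsLimit n β E t s v ∧
    IsAStickOrder n β E (moveBefore n β r s v) ∧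
    lengthOf n β E one (moveBefore n β r s v) < lengthOf n β E one r

section StickLemmas

variable {n : ℕ} {β : Type} {E : Fin n → β → Prop} {k one : β → Fin n}
  {r : (Fin n ⊕ β) → (Fin n ⊕ β) → Prop}

namespace IsAStickOrder

theorem lt_iff (hr : IsAStickOrder n β E r) {i j : Fin n} : r (inl i) (inl j) ↔ i < j :=
  hr.2 i j

theorem edge (hr : IsAStickOrder n β E r) {a : Fin n} {b : β} (h : E a b) :
    r (inl a) (inr b) :=
  hr.1.2.1 a b h

theorem trans (hr : IsAStickOrder n β E r) {x y z : Fin n ⊕ β} (h : r x y) (h' : r y z) :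
    r x z :=
  hr.1.1.toIsStrictOrder.toIsTrans.trans _ _ _ h h'

theorem irrefl (hr : IsAStickOrder n β E r) (x : Fin n ⊕ β) : ¬ r x x :=
  hr.1.1.toIsStrictOrder.toIrrefl.irrefl x

theorem asymm (hr : IsAStickOrder n β E r) {x y : Fin n ⊕ β} (h : r x y) : ¬ r y x :=
  fun h' => hr.irrefl x (hr.trans h h')

theorem total (hr : IsAStickOrder n β E r) {x y : Fin n ⊕ β} (h : x ≠ y) : r x y ∨ r y x := by
  by_contra! hc
  exact h (hr.1.1.toTrichotomous.trichotomous x y hc.1 hc.2)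

theorem not_rel_iff (hr : IsAStickOrder n β E r) {x y : Fin n ⊕ β} (h : x ≠ y) :
    ¬ r x y ↔ r y x :=
  ⟨fun hxy => (hr.total h).resolve_left hxy, fun hyx => hr.asymm hyx⟩

/-- The forbidden configuration read as a way to produce edges. -/
theorem edge_of_config (hr : IsAStickOrder n β E r) {a a' : Fin n} {b b' : β}
    (h1 : a' < a) (h2 : r (inl a) (inr b)) (h3 : r (inr b) (inr b')) (h4 : E a' b)
    (h5 : E a b') : E a b := by
  by_contra h
  exact hr.1.2.2 ⟨a, a', b, b', hr.lt_iff.2 h1, h2, h3, h4, h5, h⟩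

/-- The relation `≺°` is contained in every A-Stick order. -/
theorem rel_of_prec (hr : IsAStickOrder n β E r)
    (hk : ∀ j : β, E (k j) j ∧ ∀ i : Fin n, E i j → i ≤ k j)
    {p q : Fin n ⊕ β} (h : Prec n β E k p q) : r p q := by
  induction h with
  | O h => exact hr.lt_iff.2 h
  | A h => exact hr.edge h
  | @TB s t h j hst htk hs ht hth =>
    have hne : h ≠ j := fun e => ht (e ▸ hth)
    refine (hr.total (x := inr h) (y := inr j) (by simpa using hne)).resolve_right fun hjh => ?_
    exact ht (hr.edge_of_config hst (hr.trans (hr.lt_iff.2 htk) (hr.edge (hk j).1)) hjh hs hth)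
  | @FB t w h j _ hkt htw hth ih =>
    have htj : ¬ E t j := fun e => absurd ((hk j).2 t e) (not_le.2 hkt)
    have hne : h ≠ j := fun e => htj (e ▸ hth)
    refine (hr.total (x := inr h) (y := inr j) (by simpa using hne)).resolve_right fun hjh => ?_
    exact htj (hr.edge_of_config hkt (hr.trans (hr.edge htw) ih) hjh (hk j).1 hth)
  | T _ _ ih ih' => exact hr.trans ih ih'

end IsAStickOrder

/-- A vertex of `B` starting before `b_s` and preceding it in the order must precede `a_{k_s}`. -/
theorem rel_last_of_lt_first (hr : IsAStickOrder n β E r)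
    (hk : ∀ j : β, E (k j) j ∧ ∀ i : Fin n, E i j → i ≤ k j)
    (hone : ∀ j : β, E (one j) j ∧ ∀ i : Fin n, E i j → one j ≤ i)
    (hN : NOverlap n β E) {u s : β} {i : Fin n} (hus : r (inr u) (inr s)) (hi : E i u)
    (his : i < one s) : r (inr u) (inl (k s)) := by
  by_contra hc
  have hku : r (inl (k s)) (inr u) := (hr.not_rel_iff (by simp)).1 hc
  refine hN s u (fun e => hr.irrefl _ (e ▸ hus)) fun a ha => ?_
  have hau : r (inl a) (inr u) := by
    rcases ((hk s).2 a ha).eq_or_lt with h | h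
    · exact h ▸ hku
    · exact hr.trans (hr.lt_iff.2 h) hku
  exact hr.edge_of_config (his.trans_le ((hone s).2 a ha)) hau hus hi ha

/-- Every neighbor of `b_t` outside `N(b_s)` lies beyond `a_{k_s}`. -/
theorem last_lt_of_not_prec
    (hk : ∀ j : β, E (k j) j ∧ ∀ i : Fin n, E i j → i ≤ k j)
    (hone : ∀ j : β, E (one j) j ∧ ∀ i : Fin n, E i j → one j ≤ i)
    {t s : β} (h1 : one s ≤ one t) (hnp : ¬ Prec n β E k (inr t) (inr s)) {c : Fin n}
    (hct : E c t) (hcs : ¬ E c s) : k s < c := by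
  have hne : c ≠ k s := fun e => hcs (e ▸ (hk s).1)
  have hne' : one s ≠ c := fun e => hcs (e ▸ (hone s).1)
  by_contra hc
  exact hnp (Prec.TB (lt_of_le_of_ne (h1.trans ((hone t).2 c hct)) hne')
    (lt_of_le_of_ne (not_lt.1 hc) hne) (hone s).1 hcs hct)

/-- One step of an alternate chain with right element `b_s`. -/
def ChainStep (E : Fin n → β → Prop) (s : β) (x x' : Fin n) : Prop :=
  x' < x ∧ ¬ E x' s ∧ ∃ b, E x b ∧ E x' b

theorem exists_chain_of_reach {s : β} {c v : Fin n} (hcs : ¬ E c s)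
    (h : Relation.ReflTransGen (ChainStep E s) c v) :
    ∃ (l : ℕ) (x : ℕ → Fin n) (y : ℕ → β), x 1 = c ∧ x (l + 1) = v ∧
      (∀ g : ℕ, 1 ≤ g → g ≤ l → E (x g) (y g) ∧ E (x (g + 1)) (y g) ∧ x (g + 1) < x g) ∧
      (∀ g : ℕ, 1 ≤ g → g ≤ l + 1 → ¬ E (x g) s) := by
  induction h with
  | refl =>
    exact ⟨0, fun _ => c, fun _ => s, rfl, rfl, fun g _ _ => by omega, fun _ _ _ => hcs⟩
  | @tail z z' _ hstep ih =>
    obtain ⟨l, x, y, hx1, hxl, hE, hs⟩ := ih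
    obtain ⟨hlt, hz's, b, hzb, hbz2⟩ := hstep
    refine ⟨l + 1, fun g => if g ≤ l + 1 then x g else z', fun g => if g ≤ l then y g else b,
      by simp [hx1], by simp, fun g hg hgl => ?_, fun g hg hgl => ?_⟩
    · rcases Nat.lt_or_ge l g with h | h
      · obtain rfl : g = l + 1 := by omega
        simp [hxl, hlt, hzb, hbz2]
      · simpa [h, hgl] using hE g hg h
    · by_cases h : g ≤ l + 1
      · simpa [h] using hs g hg h
      · simpa [h] using hz's

theorem IsAltChain.reach {s : β} {c : Fin n} {l : ℕ} {x : ℕ → Fin n} {y : ℕ → β}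
    (h : IsAltChain n β E s c l x y) :
    Relation.ReflTransGen (ChainStep E s) c (x (l + 1)) := by
  obtain ⟨hx1, hE, hs, -⟩ := h
  have key : ∀ g, g ≤ l → Relation.ReflTransGen (ChainStep E s) c (x (g + 1)) := by
    intro g
    induction g with
    | zero => intro _; rw [zero_add, hx1]
    | succ g ih =>
      intro hg
      have h := hE (g + 1) (by omega) hg
      exact (ih (by omega)).tail ⟨h.2.2, hs (g + 1 + 1) (by omega) (by omega), y (g + 1), h.1, h.2.1⟩
  exact key l le_rfl

theorem isLimit_of_minimal_reach {t s : β} {c v : Fin n} (hct : E c t) (hcs : ¬ E c s)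
    (hc : ∀ i : Fin n, E i t → ¬ E i s → c ≤ i)
    (hv : Relation.ReflTransGen (ChainStep E s) c v)
    (hmin : ∀ z, Relation.ReflTransGen (ChainStep E s) c z → v ≤ z) :
    IsLimit n β E t s v := by
  refine ⟨c, ⟨hct, hcs, hc⟩, ?_, fun l x y h => hmin _ h.reach⟩
  obtain ⟨l, x, y, hx1, hxl, hE, hs⟩ := exists_chain_of_reach hcs hv
  refine ⟨l, x, y, ⟨hx1, hE, hs, ?_⟩, hxl⟩
  rintro ⟨b, a, hxb, hab, hlt, has⟩
  rw [hxl] at hxb hlt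
  exact absurd (hmin a (hv.tail ⟨hlt, has, b, hxb, hab⟩)) (not_le.2 hlt)

theorem reach_le {s : β} {c z : Fin n} (h : Relation.ReflTransGen (ChainStep E s) c z) :
    z ≤ c := by
  induction h with
  | refl => exact le_rfl
  | tail _ h ih => exact h.1.le.trans ih

/-- Alternate chains starting at a neighbor of `b_t` never leave the part of `A` beyond
`a_{k_s}`. -/
theorem last_lt_of_reach (hr : IsAStickOrder n β E r)
    (hk : ∀ j : β, E (k j) j ∧ ∀ i : Fin n, E i j → i ≤ k j)
    (hone : ∀ j : β, E (one j) j ∧ ∀ i : Fin n, E i j → one j ≤ i)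
    (hN : NOverlap n β E) {t s : β} (hts : r (inr t) (inr s))
    (hnp : ¬ Prec n β E k (inr t) (inr s)) {c z : Fin n}
    (hct : E c t) (hkc : k s < c)
    (h : Relation.ReflTransGen (ChainStep E s) c z) :
    k s < z ∧ ∀ b, E z b → ¬ Prec n β E k (inr b) (inr s) := by
  induction h with
  | refl => exact ⟨hkc, fun b hb hbs => hnp (Prec.FB hbs hkc hb hct)⟩
  | @tail z z' hz hstep ih =>
    obtain ⟨hkz, hprec⟩ := ih
    obtain ⟨hlt, hz's, b, hzb, hbz2⟩ := hstep
    have hkz' : k s < z' := by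
      by_contra hc
      have hz'k : z' < k s := lt_of_le_of_ne (not_lt.1 hc) fun e => hz's (e ▸ (hk s).1)
      rcases lt_trichotomy z' (one s) with h | h | h
      · have hzs : ¬ E z s := fun e => absurd ((hk s).2 z e) (not_le.2 hkz)
        have hzrs : r (inl z) (inr s) := by
          refine hr.trans ?_ hts
          rcases (reach_le hz).eq_or_lt with h | h
          · exact h ▸ hr.edge hct
          · exact hr.trans (hr.lt_iff.2 h) (hr.edge hct)
        have hbs : r (inr b) (inr s) := by
          have hne : b ≠ s := fun e => hzs (e ▸ hzb)
          refine (hr.not_rel_iff (by simpa using hne.symm)).1 fun hsb => hzs ?_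
          exact hr.edge_of_config hkz hzrs hsb (hk s).1 hzb
        exact hr.asymm (rel_last_of_lt_first hr hk hone hN hbs hbz2 h)
          (hr.trans (hr.lt_iff.2 hkz) (hr.edge hzb))
      · exact hz's (h ▸ (hone s).1)
      · exact hprec b hzb (Prec.TB h hz'k (hone s).1 hz's hbz2)
    exact ⟨hkz', fun b' hb' hp => hprec b hzb (Prec.FB hp hkz' hb' hbz2)⟩

/-- A vertex of `B` to the right of a chain element, up to `b_t`, only has chain elements as
neighbors to the left of it outside `N(b_s)`. -/
theorem reach_of_edge (hr : IsAStickOrder n β E r) {t s : β} {c z a : Fin n} {b : β}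
    (hct : E c t) (h : Relation.ReflTransGen (ChainStep E s) c z)
    (haz : a < z) (has : ¬ E a s) (hab : E a b) (hzb : r (inl z) (inr b))
    (hbt : b = t ∨ r (inr b) (inr t)) :
    Relation.ReflTransGen (ChainStep E s) c a := by
  induction h with
  | refl =>
    rcases hbt with rfl | hbt
    · exact .single ⟨haz, has, b, hct, hab⟩
    · exact .single ⟨haz, has, b, hr.edge_of_config haz hzb hbt hab hct, hab⟩
  | @tail z z' hz hstep ih =>
    obtain ⟨hlt, hz's, d, hzd, hz'd⟩ := id hstep
    by_cases hzb' : r (inl z) (inr b)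
    · exact ih (haz.trans hlt) hzb'
    · have hbz : r (inr b) (inl z) := (hr.not_rel_iff (by simp)).1 hzb'
      have hbz2 : E z' b :=
        hr.edge_of_config haz hzb (hr.trans hbz (hr.edge hzd)) hab hz'd
      exact (hz.tail hstep).tail ⟨haz, has, b, hbz2, hab⟩

section Move

theorem moveBefore_iff {s : β} {v : Fin n} {x y : Fin n ⊕ β} (hy : y ≠ inr s) :
    moveBefore n β r s v x y ↔
      (x = inr s ∧ (y = inl v ∨ r (inl v) y)) ∨ (x ≠ inr s ∧ r x y) := by
  simp [moveBefore, hy]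

theorem moveBefore_right_iff (hr : IsAStickOrder n β E r) {s : β} {v : Fin n}
    (hvs : r (inl v) (inr s)) {x : Fin n ⊕ β} :
    moveBefore n β r s v x (inr s) ↔ r x (inl v) := by
  have : r x (inl v) → x ≠ inr s := fun h e => hr.asymm hvs (e ▸ h)
  simp only [moveBefore]
  tauto

theorem isStrictTotalOrder_moveBefore (hr : IsAStickOrder n β E r) {s : β} {v : Fin n} :
    IsStrictTotalOrder (Fin n ⊕ β) (moveBefore n β r s v) where
  trichotomous x y hxy hyx := by
    by_contra hne
    unfold moveBefore at hxy hyx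
    by_cases hx : x = inr s
    · have hy : y ≠ inr s := fun e => hne (hx.trans e.symm)
      have := @IsAStickOrder.total n β E r hr y (inl v)
      tauto
    · by_cases hy : y = inr s
      · have := @IsAStickOrder.total n β E r hr x (inl v)
        tauto
      · have := hr.total hne
        tauto
  irrefl x hx := by
    have := hr.irrefl x
    unfold moveBefore at hx
    tauto
  trans x y z hxy hyz := by
    unfold moveBefore at *
    rcases hxy with ⟨hx, hy, h⟩ | ⟨hx, hy, h⟩ | ⟨hx, hy, h⟩ <;>
    rcases hyz with ⟨hy', hz, hyz⟩ | ⟨hy', hz, hyz⟩ | ⟨hy', hz, hyz⟩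
    · exact absurd hy' hy
    · rcases h with rfl | h
      · exact absurd hyz (hr.irrefl _)
      · exact absurd hyz (hr.asymm h)
    · rcases h with rfl | h
      · exact .inl ⟨hx, hz, .inr hyz⟩
      · exact .inl ⟨hx, hz, .inr (hr.trans h hyz)⟩
    · rcases hyz with rfl | hyz
      · exact .inr (.inr ⟨hx, hz, h⟩)
      · exact .inr (.inr ⟨hx, hz, hr.trans h hyz⟩)
    · exact absurd hy hy'
    · exact absurd hy hy'
    · exact absurd hy' hy
    · exact .inr (.inl ⟨hx, hz, hr.trans h hyz⟩)
    · exact .inr (.inr ⟨hx, hz, hr.trans h hyz⟩)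

/-- Moving `b_s` to the left, past vertices of `B` whose neighbors left of the new position are
all in `N(b_s)`, preserves A-Stick orders. -/
theorem isAStickOrder_moveBefore (hr : IsAStickOrder n β E r) {s : β} {v : Fin n}
    (hvs : r (inl v) (inr s)) (hsv : ∀ a, E a s → a < v)
    (hbetween : ∀ b a, r (inl v) (inr b) → r (inr b) (inr s) → a < v → E a b → E a s) :
    IsAStickOrder n β E (moveBefore n β r s v) := by
  refine ⟨⟨isStrictTotalOrder_moveBefore hr, fun a b hab => ?_, ?_⟩, fun i j => ?_⟩
  · by_cases hb : b = s
    · subst hb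
      exact (moveBefore_right_iff hr hvs).2 (hr.lt_iff.2 (hsv a hab))
    · exact (moveBefore_iff (by simpa using hb)).2 (.inr ⟨by simp, hr.edge hab⟩)
  · rintro ⟨a, a', b, b', haa, hab, hbb, h1, h2, h3⟩
    have haa' : r (inl a') (inl a) := by
      simpa using (moveBefore_iff (by simp)).1 haa
    rw [hr.lt_iff] at haa'
    by_cases hb : b = s
    · subst hb
      have hav := (moveBefore_right_iff hr hvs).1 hab
      have hne : b' ≠ b := fun e => h3 (e ▸ h2)
      have hvb : r (inl v) (inr b') := by
        simpa using (moveBefore_iff (by simpa using hne)).1 hbb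
      rcases hr.total (x := inr b') (y := inr b) (by simpa using hne) with h | h
      · exact h3 (hbetween b' a hvb h (hr.lt_iff.1 hav) h2)
      · exact h3 (hr.edge_of_config haa' (hr.trans hav hvs) h h1 h2)
    · have hab' : r (inl a) (inr b) := by
        simpa using (moveBefore_iff (by simpa using hb)).1 hab
      refine h3 (hr.edge_of_config haa' hab' ?_ h1 h2)
      by_cases hb' : b' = s
      · subst hb'
        exact hr.trans ((moveBefore_right_iff hr hvs).1 hbb) hvs
      · simpa [hb] using (moveBefore_iff (by simpa using hb')).1 hbb
  · rw [moveBefore_iff (by simp)]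
    simpa using hr.lt_iff

theorem rankOf_moveBefore_self (hr : IsAStickOrder n β E r) {s : β} {v : Fin n}
    (hvs : r (inl v) (inr s)) :
    rankOf n β (moveBefore n β r s v) (inr s) = rankOf n β r (inl v) := by
  simp only [rankOf, moveBefore_right_iff hr hvs]

variable [Fintype β]

open Classical in
theorem rankOf_eq_sum (v : Fin n ⊕ β) : rankOf n β r v = ∑ w, if r w v then 1 else 0 := by
  rw [rankOf, Set.ncard_eq_toFinset_card', Finset.sum_boole]
  simp

theorem rankOf_lt (hr : IsAStickOrder n β E r) {x y : Fin n ⊕ β} (h : r x y) :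
    rankOf n β r x < rankOf n β r y :=
  Set.ncard_lt_ncard ⟨fun _ hz => hr.trans hz h, fun hs => hr.irrefl x (hs h)⟩ (Set.toFinite _)

/-- The vertices passed by `b_s` when it is moved immediately before `a_v`. -/
def Passed (r : (Fin n ⊕ β) → (Fin n ⊕ β) → Prop) (s : β) (v : Fin n) (w : Fin n ⊕ β) : Prop :=
  (w = inl v ∨ r (inl v) w) ∧ r w (inr s)

open Classical in
theorem rankOf_moveBefore (hr : IsAStickOrder n β E r) {s : β} {v : Fin n}
    (hvs : r (inl v) (inr s)) {w : Fin n ⊕ β} (hw : w ≠ inr s) :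
    rankOf n β (moveBefore n β r s v) w =
      rankOf n β r w + if Passed r s v w then 1 else 0 := by
  have : (if Passed r s v w then 1 else 0) =
      ∑ z : Fin n ⊕ β, if z = inr s then (if Passed r s v w then 1 else 0) else 0 := by simp
  rw [rankOf_eq_sum, rankOf_eq_sum, this, ← Finset.sum_add_distrib]
  refine Finset.sum_congr rfl fun z _ => ?_
  rw [moveBefore_iff hw]
  by_cases hz : z = inr s
  · subst hz
    by_cases h : r (inr s) w
    · simp [h, Passed, hr.trans hvs h, hr.asymm h]
    · simp [h, Passed, (hr.not_rel_iff hw.symm).1 h]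
  · simp [hz]

open Classical in
theorem rankOf_eq_add_passed (hr : IsAStickOrder n β E r) {s : β} {v : Fin n}
    (hvs : r (inl v) (inr s)) :
    rankOf n β r (inr s) = rankOf n β r (inl v) + ∑ w, if Passed r s v w then 1 else 0 := by
  rw [rankOf_eq_sum, rankOf_eq_sum, ← Finset.sum_add_distrib]
  refine Finset.sum_congr rfl fun z _ => ?_
  by_cases hz : z = inl v
  · subst hz
    simp [hvs, Passed, hr.irrefl]
  · by_cases h : r z (inl v)
    · simp [h, Passed, hz, hr.asymm h, hr.trans h hvs]
    · simp [h, Passed, hz, (hr.not_rel_iff hz).1 h]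

/-- Moving `b_s` to the left, past `a_v` and vertices of `B` whose neighbors left of the new
position are all in `N(b_s)`, shortens the representation. -/
theorem lengthOf_moveBefore_lt (hr : IsAStickOrder n β E r)
    (hone : ∀ j : β, E (one j) j ∧ ∀ i : Fin n, E i j → one j ≤ i) {s : β} {v : Fin n}
    (hvs : r (inl v) (inr s)) (hsv : ∀ a, E a s → a < v)
    (hbetween : ∀ b a, r (inl v) (inr b) → r (inr b) (inr s) → a < v → E a b → E a s) :
    lengthOf n β E one (moveBefore n β r s v) < lengthOf n β E one r := by
  classical
  have hnp : ∀ {a : Fin n}, a < v → ¬ Passed r s v (inl a) := fun h hp => by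
    rcases hp.1 with h' | h'
    · exact h.ne (Sum.inl.inj h')
    · exact h.asymm (hr.lt_iff.1 h')
  have hself := rankOf_moveBefore_self hr hvs
  have hadd := rankOf_eq_add_passed hr hvs
  set P : ℕ := ∑ w : Fin n ⊕ β, if Passed r s v w then 1 else 0 with hP
  have hB : ∑ b, (rankOf n β (moveBefore n β r s v) (inr b) -
      rankOf n β (moveBefore n β r s v) (inl (one b))) + P ≤
      ∑ b, (rankOf n β r (inr b) - rankOf n β r (inl (one b))) +
        ∑ b : β, if Passed r s v (inr b) then 1 else 0 := by
    have hsum : P = ∑ b : β, if b = s then P else 0 := by simp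
    rw [hsum, ← Finset.sum_add_distrib, ← Finset.sum_add_distrib]
    refine Finset.sum_le_sum fun b _ => ?_
    rw [rankOf_moveBefore hr hvs (w := inl (one b)) (by simp)]
    by_cases hb : b = s
    · subst hb
      have h1 := hsv _ (hone b).1
      have := rankOf_lt hr (hr.lt_iff.2 h1)
      simp only [hnp h1, hself, hadd, if_true, if_false]
      omega
    · rw [rankOf_moveBefore hr hvs (w := inr b) (by simpa using hb)]
      simp only [hb, if_false]
      omega
  have hA : ∑ a : Fin n, ((Finset.univ.filter (fun b : β => E a b)).sup
      (fun b => rankOf n β (moveBefore n β r s v) (inr b)) -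
        rankOf n β (moveBefore n β r s v) (inl a)) ≤
      ∑ a : Fin n, ((Finset.univ.filter (fun b : β => E a b)).sup
        (fun b => rankOf n β r (inr b)) - rankOf n β r (inl a)) := by
    refine Finset.sum_le_sum fun a _ => ?_
    rw [rankOf_moveBefore hr hvs (w := inl a) (by simp)]
    suffices h : (Finset.univ.filter (fun b : β => E a b)).sup
        (fun b => rankOf n β (moveBefore n β r s v) (inr b)) ≤
        (Finset.univ.filter (fun b : β => E a b)).sup (fun b => rankOf n β r (inr b)) +
          if Passed r s v (inl a) then 1 else 0 by omega
    refine Finset.sup_le fun b hb => ?_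
    have hle : ∀ b', E a b' → rankOf n β r (inr b') ≤
        (Finset.univ.filter (fun b : β => E a b)).sup (fun b => rankOf n β r (inr b)) :=
      fun b' hb' => Finset.le_sup (f := fun b => rankOf n β r (inr b)) (by simpa using hb')
    have hab : E a b := by simpa using hb
    by_cases hbs : b = s
    · subst hbs
      have := hle b hab
      omega
    · rw [rankOf_moveBefore hr hvs (w := inr b) (by simpa using hbs)]
      by_cases hpb : Passed r s v (inr b)
      · rcases lt_or_ge a v with hav | hav
        · have := hle s (hbetween b a (by simpa using hpb.1) hpb.2 hav hab)
          have := rankOf_lt hr hpb.2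
          simp only [hpb, if_true]
          omega
        · have hpa : Passed r s v (inl a) := by
            refine ⟨?_, hr.trans (hr.edge hab) hpb.2⟩
            rcases hav.eq_or_lt with h | h
            · exact .inl (h ▸ rfl)
            · exact .inr (hr.lt_iff.2 h)
          have := hle b hab
          simp only [hpb, hpa, if_true]
          omega
      · have := hle b hab
        simp only [hpb, if_false]
        omega
  have hPlt : (∑ b : β, if Passed r s v (inr b) then 1 else 0) < P := by
    rw [hP, Fintype.sum_sum_type]
    have : 1 ≤ ∑ a : Fin n, if Passed r s v (inl a) then 1 else 0 := by
      refine le_trans ?_ (Finset.single_le_sum (fun _ _ => Nat.zero_le _) (Finset.mem_univ v))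
      simp [Passed, hvs]
    omega
  have hlt := add_lt_add_of_lt_of_le (a := ∑ b, (rankOf n β (moveBefore n β r s v) (inr b) -
      rankOf n β (moveBefore n β r s v) (inl (one b))))
    (b := ∑ b, (rankOf n β r (inr b) - rankOf n β r (inl (one b)))) (by omega) hA
  unfold lengthOf
  convert hlt using 1

end Move

/-- If `b_t` immediately precedes `b_s` among `B` without being forced to, and `b_s` does not
start after `b_t`, then the swap of `b_t` and `b_s` is good. -/
theorem goodSwap_of_consecutive [Fintype β] (hr : IsAStickOrder n β E r)
    (hk : ∀ j : β, E (k j) j ∧ ∀ i : Fin n, E i j → i ≤ k j)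
    (hone : ∀ j : β, E (one j) j ∧ ∀ i : Fin n, E i j → one j ≤ i)
    (hN : NOverlap n β E) {t s : β} (hts : r (inr t) (inr s)) (h1 : one s ≤ one t)
    (hnp : ¬ Prec n β E k (inr t) (inr s))
    (hcons : ¬ ∃ u : β, r (inr t) (inr u) ∧ r (inr u) (inr s)) :
    GoodSwap n β E one r t s := by
  have hmin_exists : ∀ S : Set (Fin n), S.Nonempty → ∃ m ∈ S, ∀ i ∈ S, m ≤ i := fun S hS =>
    S.toFinite.exists_minimalFor id S hS |>.imp fun m hm =>
      ⟨hm.1, fun i hi => (le_total m i).elim id fun h => hm.2 hi h⟩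
  have hne : t ≠ s := fun e => hr.irrefl _ (e ▸ hts)
  obtain ⟨c, ⟨hct, hcs⟩, hc⟩ := hmin_exists {c | E c t ∧ ¬ E c s}
    (by simpa [Set.Nonempty] using hN t s hne)
  obtain ⟨v, hv, hmin⟩ :=
    hmin_exists {z | Relation.ReflTransGen (ChainStep E s) c z} ⟨c, .refl⟩
  have hkc := last_lt_of_not_prec hk hone h1 hnp hct hcs
  have hkv := (last_lt_of_reach hr hk hone hN hts hnp hct hkc hv).1
  have hsv : ∀ a, E a s → a < v := fun a ha => ((hk s).2 a ha).trans_lt hkv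
  have hvs : r (inl v) (inr s) := by
    refine hr.trans ?_ hts
    rcases (reach_le hv).eq_or_lt with h | h
    · exact h ▸ hr.edge hct
    · exact hr.trans (hr.lt_iff.2 h) (hr.edge hct)
  have hbetween : ∀ b a, r (inl v) (inr b) → r (inr b) (inr s) → a < v → E a b → E a s := by
    intro b a hvb hbs hav hab
    by_contra has
    have hbt : b = t ∨ r (inr b) (inr t) := by
      by_contra! h
      exact hcons ⟨b, (hr.not_rel_iff (by simpa using h.1)).1 h.2, hbs⟩
    exact absurd (hmin a (reach_of_edge hr hct hv hav has hab hvb hbt)) (not_le.2 hav)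
  exact ⟨v, isLimit_of_minimal_reach hct hcs (fun i hi hi' => hc i ⟨hi, hi'⟩) hv hmin,
    isAStickOrder_moveBefore hr hvs hsv hbetween,
    lengthOf_moveBefore_lt hr hone hvs hsv hbetween⟩

theorem Prec.exists_inr {p q : Fin n ⊕ β} (h : Prec n β E k p q) {b : β} (hp : p = inr b) :
    ∃ b', q = inr b' := by
  induction h generalizing b with
  | O | A => simp at hp
  | TB | FB => exact ⟨_, rfl⟩
  | T _ _ ihpq ihqr => obtain ⟨_, hb⟩ := ihpq hp; exact ihqr hb

/-- If all vertices of `B` strictly between `b_t` and `b_s` start after `b_t`, none of them is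
forced before `b_s` unless `b_t` is. -/
theorem not_prec_of_between (hr : IsAStickOrder n β E r)
    (hk : ∀ j : β, E (k j) j ∧ ∀ i : Fin n, E i j → i ≤ k j)
    (hone : ∀ j : β, E (one j) j ∧ ∀ i : Fin n, E i j → one j ≤ i)
    (hN : NOverlap n β E) {t s : β} (h1 : one s ≤ one t)
    (hnp : ¬ Prec n β E k (inr t) (inr s))
    (hall : ∀ u, r (inr t) (inr u) → r (inr u) (inr s) → one t < one u)
    {p q : Fin n ⊕ β} (h : Prec n β E k p q) {u : β} (hp : p = inr u) (hq : q = inr s)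
    (htu : r (inr t) (inr u)) : False := by
  have hus : r (inr u) (inr s) := hp ▸ hq ▸ hr.rel_of_prec hk h
  have htk : r (inl (k s)) (inr t) := by
    have hts := hr.trans htu hus
    obtain ⟨c, hct, hcs⟩ : ∃ c, E c t ∧ ¬ E c s := by
      simpa using hN t s fun e => hr.irrefl _ (e ▸ hts)
    exact hr.trans (hr.lt_iff.2 (last_lt_of_not_prec hk hone h1 hnp hct hcs)) (hr.edge hct)
  have hone_u := hall u htu hus
  induction h generalizing u with
  | O | A => simp at hp
  | @TB i a h j hia hak hi ha hah =>
    obtain rfl := Sum.inr.inj hp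
    obtain rfl := Sum.inr.inj hq
    have hat : E a t := hr.edge_of_config (hone_u.trans_le ((hone _).2 a hah))
      (hr.trans (hr.lt_iff.2 hak) htk) htu (hone t).1 hah
    exact hnp (Prec.TB hia hak hi ha hat)
  | @FB a w h j hwj hka haw hah ih =>
    obtain rfl := Sum.inr.inj hp
    obtain rfl := Sum.inr.inj hq
    have hws := hr.rel_of_prec hk hwj
    by_cases htw : r (inr t) (inr w)
    · exact ih rfl rfl htw hws (hall w htw hws)
    · have hat : E a t := by
        by_cases hwt : w = t
        · exact hwt ▸ haw
        · exact hr.edge_of_config (hone_u.trans_le ((hone _).2 a hah))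
            (hr.trans (hr.edge haw) ((hr.total (by simpa using hwt)).resolve_right htw)) htu
            (hone t).1 hah
      exact hnp (Prec.FB hwj hka haw hat)
  | @T p z q hpz hzq _ ih =>
    obtain ⟨w, rfl⟩ := hpz.exists_inr hp
    subst hp hq
    have htw := hr.trans htu (hr.rel_of_prec hk hpz)
    have hws := hr.rel_of_prec hk hzq
    exact ih rfl rfl htw hws (hall w htw hws)

theorem exists_goodSwap [Fintype β] (hr : IsAStickOrder n β E r)
    (hk : ∀ j : β, E (k j) j ∧ ∀ i : Fin n, E i j → i ≤ k j)
    (hone : ∀ j : β, E (one j) j ∧ ∀ i : Fin n, E i j → one j ≤ i)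
    (hN : NOverlap n β E) (t s : β) (hts : r (inr t) (inr s)) (h1 : one s ≤ one t)
    (hnp : ¬ Prec n β E k (inr t) (inr s)) :
    ∃ x y : β,
      (x = t ∨ r (inr t) (inr x)) ∧ r (inr x) (inr y) ∧ (y = s ∨ r (inr y) (inr s)) ∧
      (¬ ∃ u : β, r (inr x) (inr u) ∧ r (inr u) (inr y)) ∧ GoodSwap n β E one r x y := by
  induction hm : {u : β | r (inr t) (inr u) ∧ r (inr u) (inr s)}.ncard using
    Nat.strong_induction_on generalizing t s with
  | _ m ih =>
  subst hm
  by_cases hcons : ∃ u : β, r (inr t) (inr u) ∧ r (inr u) (inr s)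
  swap
  · exact ⟨t, s, .inl rfl, hts, .inl rfl, hcons,
      goodSwap_of_consecutive hr hk hone hN hts h1 hnp hcons⟩
  by_contra hno
  have hleft : ∀ u, r (inr t) (inr u) → r (inr u) (inr s) → one u ≤ one t →
      Prec n β E k (inr t) (inr u) := by
    intro u htu hus hu
    by_contra hp
    refine hno ?_
    have hlt : {w : β | r (inr t) (inr w) ∧ r (inr w) (inr u)}.ncard <
        {w : β | r (inr t) (inr w) ∧ r (inr w) (inr s)}.ncard :=
      Set.ncard_lt_ncard ⟨fun w hw => ⟨hw.1, hr.trans hw.2 hus⟩,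
        fun hs => hr.irrefl _ (hs (a := u) ⟨htu, hus⟩).2⟩ (Set.toFinite _)
    obtain ⟨x, y, hx, hxy, hy, h⟩ := ih _ hlt t u htu hu hp rfl
    refine ⟨x, y, hx, hxy, .inr ?_, h⟩
    rcases hy with rfl | hy
    · exact hus
    · exact hr.trans hy hus
  have hright : ∀ u, r (inr t) (inr u) → r (inr u) (inr s) → one s ≤ one u →
      Prec n β E k (inr u) (inr s) := by
    intro u htu hus hu
    by_contra hp
    refine hno ?_
    have hlt : {w : β | r (inr u) (inr w) ∧ r (inr w) (inr s)}.ncard <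
        {w : β | r (inr t) (inr w) ∧ r (inr w) (inr s)}.ncard :=
      Set.ncard_lt_ncard ⟨fun w hw => ⟨hr.trans htu hw.1, hw.2⟩,
        fun hs => hr.irrefl _ (hs (a := u) ⟨htu, hus⟩).1⟩ (Set.toFinite _)
    obtain ⟨x, y, hx, h⟩ := ih _ hlt u s hus hu hp rfl
    refine ⟨x, y, .inr ?_, h⟩
    rcases hx with rfl | hx
    · exact htu
    · exact hr.trans htu hx
  have hfirst : ∀ u, r (inr t) (inr u) → r (inr u) (inr s) → one s ≤ one u := by
    intro u htu hus
    by_contra! hlt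
    obtain ⟨c, hct, hcs⟩ : ∃ c, E c t ∧ ¬ E c s := by
      simpa using hN t s fun e => hr.irrefl _ (e ▸ hts)
    have hkc := last_lt_of_not_prec hk hone h1 hnp hct hcs
    exact hr.asymm (hr.trans htu (rel_last_of_lt_first hr hk hone hN hus (hone u).1 hlt))
      (hr.trans (hr.lt_iff.2 hkc) (hr.edge hct))
  have hprec : ∀ u, r (inr t) (inr u) → r (inr u) (inr s) → Prec n β E k (inr u) (inr s) :=
    fun u htu hus => hright u htu hus (hfirst u htu hus)
  obtain ⟨u, htu, hus⟩ := hcons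
  refine not_prec_of_between hr hk hone hN h1 hnp (fun w htw hws => ?_) (hprec u htu hus)
    rfl rfl htu
  by_contra! hle
  exact hnp (Prec.T (hleft w htw hws hle) (hprec w htw hws))

end StickLemmas

/-- Let `G` be an A-Stick N-overlap graph with no isolated vertices, `≺` an
A-Stick order of `G`, and `b_t ≺ b_s` in `B` with `1_s ≤ 1_t` and `b_t ≺° b_s` not holding.
Then either (a) some pair `b_x ≺ b_y`, consecutive among `B` with `b_t ⪯ b_x ≺ b_y ⪯ b_s`,
admits a good swap; or (b) there is `b_q` with `b_t ≺ b_q ≺ b_s`, `b_t ≺° b_q` and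
`1_q < 1_s`. -/
theorem stmt14 (n : ℕ) (β : Type) [Fintype β] (E : Fin n → β → Prop) (k : β → Fin n)
    (hk : ∀ j : β, E (k j) j ∧ ∀ i : Fin n, E i j → i ≤ k j)
    (one : β → Fin n)
    (hone : ∀ j : β, E (one j) j ∧ ∀ i : Fin n, E i j → one j ≤ i)
    (hN : NOverlap n β E)
    (hnoiso : ∀ a : Fin n, ∃ b : β, E a b)
    (r : (Fin n ⊕ β) → (Fin n ⊕ β) → Prop)
    (hr : IsAStickOrder n β E r)
    (t s : β) (hts : r (inr t) (inr s))
    (h1 : one s ≤ one t)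
    (hnp : ¬ Prec n β E k (inr t) (inr s)) :
    (∃ x y : β,
        (x = t ∨ r (inr t) (inr x)) ∧ r (inr x) (inr y) ∧ (y = s ∨ r (inr y) (inr s)) ∧
        (¬ ∃ u : β, r (inr x) (inr u) ∧ r (inr u) (inr y)) ∧
        GoodSwap n β E one r x y) ∨
    (∃ q : β, r (inr t) (inr q) ∧ r (inr q) (inr s) ∧
        Prec n β E k (inr t) (inr q) ∧ one q < one s) := by
  exact .inl (exists_goodSwap hr hk hone hN t s hts h1 hnp)
end

section
/- If G is an A-Stick N-overlap graph with no isolated vertices and ≺^c is its canonical order, then length(≺^c) ≤ length(≺) for every A-Stick order ≺ of G; that is, the canonical A-Stick representation has minimum total segment length among all A-Stick representations of G. -/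
open Sum

/-- A canonical order for `G` (with `m j = max {i | a_i ≺° b_j}` given as a parameter):
a linear (strict total) order on `A ∪ B` extending `≺°` in which every `b_j` is
left-optimal, i.e. `a_{m_j} ≺ b_j` and `b_j ≺ a_{m_j + 1}` whenever `m_j < n`. -/
def IsCanonicalOrder (n : ℕ) (β : Type) (E : Fin n → β → Prop) (k : β → Fin n)
    (m : β → Fin n) (r : (Fin n ⊕ β) → (Fin n ⊕ β) → Prop) : Prop :=
  IsStrictTotalOrder (Fin n ⊕ β) r ∧
  (∀ c d : Fin n ⊕ β, Prec n β E k c d → r c d) ∧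
  ∀ j : β, r (inl (m j)) (inr j) ∧
    ∀ hlt : (m j : ℕ) + 1 < n, r (inr j) (inl ⟨(m j : ℕ) + 1, hlt⟩)
/-! ### Ranks in finite strict total orders -/

section Rank

variable {V : Type*} (r : V → V → Prop) [IsStrictTotalOrder V r]

lemma not_rel_iff_eq_or_rel {v w : V} : ¬ r v w ↔ w = v ∨ r w v := by
  constructor
  · intro h
    rcases trichotomous_of r v w with h' | h' | h'
    · exact (h h').elim
    · exact Or.inl h'.symm
    · exact Or.inr h'
  · rintro (rfl | h)
    · exact irrefl_of r w
    · exact asymm_of r h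

variable [Finite V]

lemma ncard_setOf_not_rel (v : V) : {w | ¬ r v w}.ncard = {w | r w v}.ncard + 1 := by
  have h : {w | ¬ r v w} = insert v {w | r w v} := by
    ext w
    simp only [Set.mem_ofPred_eq, Set.mem_insert_iff]
    exact not_rel_iff_eq_or_rel r
  have hv : v ∉ {w | r w v} := irrefl_of r v
  rw [h, Set.ncard_insert_of_notMem hv (Set.toFinite _)]

lemma ncard_add_ncard_between {a b : V} (hab : r a b) :
    {w | r w a}.ncard + {w | r a w ∧ ¬ r b w}.ncard = {w | r w b}.ncard := by
  have h : {w | ¬ r b w} = {w | ¬ r a w} ∪ {w | r a w ∧ ¬ r b w} := by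
    ext w
    simp only [Set.mem_ofPred_eq, Set.mem_union]
    constructor
    · intro h
      by_cases h' : r a w
      · exact Or.inr ⟨h', h⟩
      · exact Or.inl h'
    · rintro (h | h)
      · exact fun h' => h (trans_of r hab h')
      · exact h.2
  have hd : Disjoint {w | ¬ r a w} {w | r a w ∧ ¬ r b w} :=
    Set.disjoint_left.2 fun w hw hw' => hw hw'.1
  have hc := congrArg Set.ncard h
  rw [Set.ncard_union_eq hd (Set.toFinite _) (Set.toFinite _), ncard_setOf_not_rel,
    ncard_setOf_not_rel] at hc
  omega

lemma ncard_lt_ncard_of_rel {a b : V} (hab : r a b) :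
    {w | r w a}.ncard < {w | r w b}.ncard := by
  refine Set.ncard_lt_ncard ⟨fun w hw => trans_of r hw hab, fun h => ?_⟩ (Set.toFinite _)
  exact irrefl_of r a (h hab)

end Rank

open Classical in
lemma two_mul_sum_ncard_setOf_rel {V : Type*} [Fintype V] (r : V → V → Prop)
    [IsStrictTotalOrder V r] :
    2 * ∑ v, {w | r w v}.ncard + Fintype.card V = Fintype.card V * Fintype.card V := by
  have hswap : ∑ v, {w | r w v}.ncard = ∑ v, {w | r v w}.ncard := by
    simp only [Set.ncard_eq_toFinset_card', Set.toFinset_ofPred]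
    exact (Finset.sum_card_bipartiteAbove_eq_sum_card_bipartiteBelow r).symm
  have hcompl : ∀ v, {w | r w v}.ncard + {w | r v w}.ncard + 1 = Fintype.card V := by
    intro v
    have h := Set.ncard_add_ncard_compl {w | r v w}
    rw [Set.compl_ofPred, ncard_setOf_not_rel, Nat.card_eq_fintype_card] at h
    omega
  have hsum := Finset.sum_congr (rfl : (Finset.univ : Finset V) = Finset.univ)
    fun v _ => hcompl v
  simp only [Finset.sum_add_distrib, Finset.sum_const, Finset.card_univ, smul_eq_mul,
    mul_one] at hsum
  omega

lemma sum_tsub_add_sum {ι : Type*} (s : Finset ι) (f g : ι → ℕ) (h : ∀ i ∈ s, g i ≤ f i) :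
    ∑ i ∈ s, (f i - g i) + ∑ i ∈ s, g i = ∑ i ∈ s, f i := by
  rw [← Finset.sum_add_distrib]
  exact Finset.sum_congr rfl fun i hi => Nat.sub_add_cancel (h i hi)

/-! ### The structure of `≺°` -/

section Structure

variable {n : ℕ} {β : Type} {E : Fin n → β → Prop} {k : β → Fin n}

/-- What `p ≺° q` says, according to the sides of `p` and `q`. -/
def PrecShape (n : ℕ) (β : Type) (E : Fin n → β → Prop) (k : β → Fin n) :
    (Fin n ⊕ β) → (Fin n ⊕ β) → Prop
  | inl i, inl j => i < j
  | inr _, inl _ => False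
  | inl i, inr j => ∃ t w, i ≤ t ∧ E t w ∧ (w = j ∨ Prec n β E k (inr w) (inr j))
  | inr w, inr j => ∀ t h, k j < t → t ≤ k w → E t h → Prec n β E k (inr h) (inr j)

lemma Prec.shape (hk : ∀ j, E (k j) j ∧ ∀ i, E i j → i ≤ k j) {p q : Fin n ⊕ β}
    (hpq : Prec n β E k p q) : PrecShape n β E k p q := by
  induction hpq with
  | O h => exact h
  | @A t j h => exact ⟨t, j, le_rfl, h, Or.inl rfl⟩
  | @TB s t w j hst htj hsj htj' htw =>
    intro u h hju huw huh
    have hwj : Prec n β E k (inr w) (inr j) := .TB hst htj hsj htj' htw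
    by_cases hE : E u w
    · exact .FB hwj hju hE huh
    · have hne : u ≠ k w := fun h' => hE (h' ▸ (hk w).1)
      exact .T (.TB (htj.trans hju) (lt_of_le_of_ne huw hne) htw hE huh) hwj
  | @FB t w' w j hw'j hjt htw' htw ih =>
    intro u h hju huw huh
    have hwj : Prec n β E k (inr w) (inr j) := .FB hw'j hjt htw' htw
    by_cases huw' : u ≤ k w'
    · exact ih u h hju huw' huh
    · by_cases hE : E u w
      · exact .FB hwj hju hE huh
      · have hne : u ≠ k w := fun h' => hE (h' ▸ (hk w).1)
        have htu : t < u := ((hk w').2 t htw').trans_lt (not_le.1 huw')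
        exact .T (.TB htu (lt_of_le_of_ne huw hne) htw hE huh) hwj
  | @T p q s hpq hqs ih₁ ih₂ =>
    rcases p with p | p <;> rcases q with q | q <;> rcases s with s | s
    · exact lt_trans (show p < q from ih₁) ih₂
    · obtain ⟨t, w, h, hw⟩ := ih₂
      exact ⟨t, w, (show p < q from ih₁).le.trans h, hw⟩
    · exact ih₂.elim
    · obtain ⟨t, w, h, hE, hw⟩ := ih₁
      refine ⟨t, w, h, hE, Or.inr ?_⟩
      rcases hw with rfl | hw
      · exact hqs
      · exact .T hw hqs
    · exact ih₁.elim
    · exact ih₁.elim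
    · exact ih₂.elim
    · intro u h hsu hup huh
      rcases le_or_gt u (k q) with huq | hqu
      · exact ih₂ u h hsu huq huh
      · exact .T (ih₁ u h hqu hup huh) hqs

/-- If `a_i ≺° b_j` is a non-edge to the right of some neighbor of `b_j`, all neighbors of `a_i`
precede `b_j`. -/
lemma Prec.inr_of_not_edge (hk : ∀ j, E (k j) j ∧ ∀ i, E i j → i ≤ k j) {i s : Fin n} {h j : β}
    (hij : Prec n β E k (inl i) (inr j)) (hsi : s < i) (hsj : E s j) (hnij : ¬ E i j)
    (hih : E i h) : Prec n β E k (inr h) (inr j) := by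
  rcases lt_trichotomy i (k j) with hlt | heq | hgt
  · exact .TB hsi hlt hsj hnij hih
  · exact (hnij (heq ▸ (hk j).1)).elim
  · obtain ⟨t, w, hit, htw, rfl | hw⟩ := hij.shape hk
    · exact (lt_irrefl _ (((hk w).2 t htw).trans_lt (hgt.trans_le hit))).elim
    · exact hw.shape hk i h hgt (hit.trans ((hk w).2 t htw)) hih

lemma IsAStickOrder.rel_of_prec_s16 (hk : ∀ j, E (k j) j ∧ ∀ i, E i j → i ≤ k j)
    {r : (Fin n ⊕ β) → (Fin n ⊕ β) → Prop} (hr : IsAStickOrder n β E r) {p q : Fin n ⊕ β}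
    (hpq : Prec n β E k p q) : r p q := by
  obtain ⟨⟨hto, hedge, hforb⟩, hord⟩ := hr
  have key : ∀ {s t : Fin n} {h j : β}, s < t → r (inl t) (inr j) → E s j → ¬ E t j → E t h →
      r (inr h) (inr j) := by
    intro s t h j hst htj hsj hntj hth
    rcases trichotomous_of r (inr h) (inr j) with h' | h' | h'
    · exact h'
    · cases h'
      exact (hntj hth).elim
    · exact (hforb ⟨t, s, j, h, (hord s t).2 hst, htj, h', hsj, hth, hntj⟩).elim
  induction hpq with
  | O h => exact (hord _ _).2 h
  | A h => exact hedge _ _ h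
  | TB hst htj hsj hntj hth =>
    exact key hst (trans_of r ((hord _ _).2 htj) (hedge _ _ (hk _).1)) hsj hntj hth
  | FB _ hjt htw hth ih =>
    exact key hjt (trans_of r (hedge _ _ htw) ih) (hk _).1
      (fun h => absurd ((hk _).2 _ h) (not_le.2 hjt)) hth
  | T _ _ ih₁ ih₂ => exact trans_of r ih₁ ih₂

lemma IsCanonicalOrder.inl_rel_inl_iff {m : β → Fin n} {r : (Fin n ⊕ β) → (Fin n ⊕ β) → Prop}
    (hr : IsCanonicalOrder n β E k m r) {i j : Fin n} : r (inl i) (inl j) ↔ i < j := by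
  obtain ⟨hto, hext, -⟩ := hr
  refine ⟨fun h => ?_, fun h => hext _ _ (.O h)⟩
  rcases lt_trichotomy i j with h' | rfl | h'
  · exact h'
  · exact (irrefl_of r _ h).elim
  · exact (asymm_of r h (hext _ _ (.O h'))).elim

lemma IsCanonicalOrder.prec_of_inl_rel_inr {m : β → Fin n}
    (hm : ∀ j, Prec n β E k (inl (m j)) (inr j))
    {r : (Fin n ⊕ β) → (Fin n ⊕ β) → Prop} (hr : IsCanonicalOrder n β E k m r) {i : Fin n} {j : β}
    (hij : r (inl i) (inr j)) : Prec n β E k (inl i) (inr j) := by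
  have hto := hr.1
  rcases lt_trichotomy i (m j) with h | rfl | h
  · exact .T (.O h) (hm j)
  · exact hm j
  · have hlt : (m j : ℕ) + 1 < n := lt_of_le_of_lt (Nat.succ_le_of_lt h) i.isLt
    have h₁ := (hr.2.2 j).2 hlt
    have h₂ : (⟨(m j : ℕ) + 1, hlt⟩ : Fin n) < i := by
      rw [← hr.inl_rel_inl_iff]
      exact (trichotomous_of r (inl ⟨(m j : ℕ) + 1, hlt⟩) (inl i)).resolve_right (by
        rintro (h' | h')
        · rw [h'] at h₁
          exact asymm_of r h₁ hij
        · exact absurd (hr.inl_rel_inl_iff.1 h') (not_lt.2 (Nat.succ_le_of_lt h)))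
    exact (asymm_of r hij (trans_of r h₁ (hr.inl_rel_inl_iff.2 h₂))).elim

/-- The part of a canonical order spanned by the segment of `a` ending at `b` is spanned by the
segment of `a` in every A-Stick order. -/
lemma IsCanonicalOrder.between_subset (hk : ∀ j, E (k j) j ∧ ∀ i, E i j → i ≤ k j)
    {one : β → Fin n} (hone : ∀ j, E (one j) j ∧ ∀ i, E i j → one j ≤ i) {m : β → Fin n}
    (hm : ∀ j, Prec n β E k (inl (m j)) (inr j)) (hN : NOverlap n β E)
    {rc r : (Fin n ⊕ β) → (Fin n ⊕ β) → Prop} (hrc : IsCanonicalOrder n β E k m rc)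
    (hr : IsAStickOrder n β E r) {a : Fin n} {b b' : β} (hab : E a b)
    (hmax : ∀ h, E a h → ¬ r (inr b') (inr h)) :
    {w | rc (inl a) w ∧ ¬ rc (inr b) w} ⊆ {w | r (inl a) w ∧ ¬ r (inr b') w} := by
  have hext : ∀ {p q}, Prec n β E k p q → r p q := fun h => hr.rel_of_prec_s16 hk h
  have hleft : ∀ {i j}, rc (inl i) (inr j) → Prec n β E k (inl i) (inr j) :=
    fun h => hrc.prec_of_inl_rel_inr hm h
  have hto := hr.1.1
  have htoc := hrc.1
  have hle : ∀ {w}, r w (inr b) → ¬ r (inr b') w :=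
    fun h h' => hmax b hab (trans_of r h' h)
  rintro (i | h) ⟨hi, hbi⟩
  · refine ⟨(hr.2 _ _).2 (hrc.inl_rel_inl_iff.1 hi), hle (hext (hleft ?_))⟩
    exact ((not_rel_iff_eq_or_rel rc).1 hbi).resolve_left (by simp)
  · refine ⟨hext (hleft hi), fun hbh => ?_⟩
    have hah : ¬ E a h := fun h' => hmax h h' hbh
    have hne : b ≠ h := by
      rintro rfl
      exact hah hab
    have hbhr : r (inr b) (inr h) := by
      rcases trichotomous_of r (inr b) (inr h) with h' | h' | h'
      · exact h'
      · exact (hne (inr_injective h')).elim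
      · exact (hle h' hbh).elim
    rcases lt_trichotomy (one h) a with hlt | heq | hgt
    · exact hbi (hrc.2.1 _ _ ((hleft hi).inr_of_not_edge hk hlt (hone h).1 hah hab))
    · exact hah (heq ▸ (hone h).1)
    · obtain ⟨t, hth, htb⟩ := not_forall₂.1 (hN h b hne.symm)
      have hat : a < t := hgt.trans_le ((hone h).2 t hth)
      have htb' : ¬ rc (inl t) (inr b) := fun h' => hr.1.2.2
        ⟨t, a, b, h, (hr.2 _ _).2 hat, hext (hleft h'), hbhr, hab, hth, htb⟩
      have := ((not_rel_iff_eq_or_rel rc).1 htb').resolve_left (by simp)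
      exact hbi (trans_of rc this (hrc.2.1 _ _ (.A hth)))

end Structure

/-- If `G` is an A-Stick N-overlap graph with no isolated vertices and
`≺^c` is its canonical order, then `length(≺^c) ≤ length(≺)` for every A-Stick order `≺` of
`G`: the canonical A-Stick representation has minimum total segment length. -/
theorem stmt16 (n : ℕ) (β : Type) [Fintype β] (E : Fin n → β → Prop) (k : β → Fin n)
    (hk : ∀ j : β, E (k j) j ∧ ∀ i : Fin n, E i j → i ≤ k j)
    (one : β → Fin n)
    (hone : ∀ j : β, E (one j) j ∧ ∀ i : Fin n, E i j → one j ≤ i)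
    (m : β → Fin n)
    (hm : ∀ j : β, Prec n β E k (inl (m j)) (inr j) ∧
      ∀ i : Fin n, Prec n β E k (inl i) (inr j) → i ≤ m j)
    (hA : ∃ r, IsAStickOrder n β E r)
    (hN : NOverlap n β E)
    (hnoiso : ∀ a : Fin n, ∃ b : β, E a b)
    (rc : (Fin n ⊕ β) → (Fin n ⊕ β) → Prop)
    (hrc : IsCanonicalOrder n β E k m rc) :
    ∀ r, IsAStickOrder n β E r → lengthOf n β E one rc ≤ lengthOf n β E one r := by
  classical
  intro r hr
  have hmp : ∀ j, Prec n β E k (inl (m j)) (inr j) := fun j => (hm j).1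
  have hto := hr.1.1
  have htoc := hrc.1
  have hleft : ∀ {i j}, rc (inl i) (inr j) → r (inl i) (inr j) :=
    fun h => hr.rel_of_prec_s16 hk (hrc.prec_of_inl_rel_inr hmp h)
  have hedge : ∀ {i j}, E i j → r (inl i) (inr j) := fun h => hr.1.2.1 _ _ h
  have hedgec : ∀ {i j}, E i j → rc (inl i) (inr j) := fun h => hrc.2.1 _ _ (.A h)
  have hrankA : ∀ a, rankOf n β r (inl a) ≤ rankOf n β rc (inl a) := by
    intro a
    refine Set.ncard_le_ncard ?_ (Set.toFinite _)
    rintro (i | j) h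
    · exact hrc.inl_rel_inl_iff.2 ((hr.2 _ _).1 h)
    · exact ((not_rel_iff_eq_or_rel rc).1
        (fun h' => asymm_of r (hleft h') h)).resolve_left (by simp)
  refine Nat.add_le_add ?_ (Finset.sum_le_sum fun a _ => ?_)
  · have hsplit := sum_tsub_add_sum Finset.univ (fun b => rankOf n β r (inr b))
      (fun b => rankOf n β r (inl (one b)))
      fun b _ => (ncard_lt_ncard_of_rel r (hedge (hone b).1)).le
    have hsplitc := sum_tsub_add_sum Finset.univ (fun b => rankOf n β rc (inr b))
      (fun b => rankOf n β rc (inl (one b)))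
      fun b _ => (ncard_lt_ncard_of_rel rc (hedgec (hone b).1)).le
    have htot : 2 * ∑ v, rankOf n β r v + _ = _ := two_mul_sum_ncard_setOf_rel r
    have htotc : 2 * ∑ v, rankOf n β rc v + _ = _ := two_mul_sum_ncard_setOf_rel rc
    rw [Fintype.sum_sum_type] at htot htotc
    have h₁ : ∑ a, rankOf n β r (inl a) ≤ ∑ a, rankOf n β rc (inl a) :=
      Finset.sum_le_sum fun a _ => hrankA a
    have h₂ : ∑ b, rankOf n β r (inl (one b)) ≤ ∑ b, rankOf n β rc (inl (one b)) :=
      Finset.sum_le_sum fun b _ => hrankA (one b)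
    omega
  · obtain ⟨b₀, hb₀⟩ := hnoiso a
    have hne : (Finset.univ.filter fun b : β => E a b).Nonempty := ⟨b₀, by simpa using hb₀⟩
    obtain ⟨b, hb, hbsup⟩ := Finset.exists_mem_eq_sup _ hne fun b => rankOf n β rc (inr b)
    obtain ⟨b', hb', hbsup'⟩ := Finset.exists_mem_eq_sup _ hne fun b => rankOf n β r (inr b)
    have hmax : ∀ h, E a h → ¬ r (inr b') (inr h) := by
      intro h hah hlt
      have hle := Finset.le_sup (f := fun b => rankOf n β r (inr b))
        (Finset.mem_filter.2 ⟨Finset.mem_univ h, hah⟩)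
      rw [hbsup'] at hle
      exact absurd (ncard_lt_ncard_of_rel r hlt) (not_lt.2 hle)
    rw [hbsup, hbsup']
    have hab := (Finset.mem_filter.1 hb).2
    have hab' := (Finset.mem_filter.1 hb').2
    have h := ncard_add_ncard_between r (hedge hab')
    have hc := ncard_add_ncard_between rc (hedgec hab)
    have hsub := Set.ncard_le_ncard (hrc.between_subset hk hone hmp hN hr hab hmax)
      (Set.toFinite _)
    unfold rankOf
    omega
end
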